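/- arXiv:1605.08131 — 2 statements merged into one kernel-verified Lean document; each statement's English description precedes it below -/
import Mathlib

section
/- Let p be a prime, let V and W be free modules over Z/p², and let φ : V → W be a Z/p²-linear map with induced map ψ : V/pV → W/pW. Then the map f from pW/φ(pV) to coker ψ = (W/pW)/ψ(V/pV) defined by f(pw + φ(pV)) = (w + pW) + ψ(V/pV) is a well-defined Z/p-linear isomorphism. -/
/-- The submodule `pV` of a `ℤ/p²`-module `V`, i.e. the image of multiplication by `p`. -/
def pSub (p : ℕ) (V : Type*) [AddCommGroup V] [Module (ZMod (p ^ 2)) V] :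
    Submodule (ZMod (p ^ 2)) V :=
  LinearMap.range ((p : ZMod (p ^ 2)) • (LinearMap.id : V →ₗ[ZMod (p ^ 2)] V))

lemma smul_mem_pSub (p : ℕ) (V : Type*) [AddCommGroup V] [Module (ZMod (p ^ 2)) V] (x : V) :
    (p : ZMod (p ^ 2)) • x ∈ pSub p V :=
  ⟨x, rfl⟩

/-- `V/pV` is a `ℤ/p`-vector space. -/
noncomputable instance quotModZMod (p : ℕ) [NeZero p] (V : Type*) [AddCommGroup V]
    [Module (ZMod (p ^ 2)) V] : Module (ZMod p) (V ⧸ pSub p V) :=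
  AddCommGroup.zmodModule (by
    intro x
    obtain ⟨v, rfl⟩ := Submodule.Quotient.mk_surjective _ x
    rw [← Nat.cast_smul_eq_nsmul (ZMod (p ^ 2)), ← Submodule.Quotient.mk_smul,
      Submodule.Quotient.mk_eq_zero]
    exact smul_mem_pSub p V v)

/-- The map `V/pV → W/pW` induced by a `ℤ/p²`-linear map `φ : V → W`, as a
`ℤ/p`-linear map. -/
noncomputable def inducedMap (p : ℕ) [NeZero p] {V W : Type*} [AddCommGroup V]
    [Module (ZMod (p ^ 2)) V] [AddCommGroup W] [Module (ZMod (p ^ 2)) W]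
    (φ : V →ₗ[ZMod (p ^ 2)] W) :
    (V ⧸ pSub p V) →ₗ[ZMod p] (W ⧸ pSub p W) :=
  ((Submodule.mapQ (pSub p V) (pSub p W) φ (by
      rintro x ⟨v, rfl⟩
      exact ⟨φ v, by simp⟩)).toAddMonoidHom).toZModLinearMap p

@[simp] lemma inducedMap_mk (p : ℕ) [NeZero p] {V W : Type*} [AddCommGroup V]
    [Module (ZMod (p ^ 2)) V] [AddCommGroup W] [Module (ZMod (p ^ 2)) W]
    (φ : V →ₗ[ZMod (p ^ 2)] W) (v : V) :
    inducedMap p φ (Submodule.Quotient.mk v) = Submodule.Quotient.mk (φ v) := rfl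

lemma p_smul_pSub (p : ℕ) (V : Type*) [AddCommGroup V] [Module (ZMod (p ^ 2)) V]
    (y : ↥(pSub p V)) : p • y = 0 := by
  obtain ⟨y, hy⟩ := y
  obtain ⟨x, rfl⟩ := hy
  ext
  show p • ((p : ZMod (p ^ 2)) • (LinearMap.id : V →ₗ[ZMod (p ^ 2)] V)) x = 0
  rw [← Nat.cast_smul_eq_nsmul (ZMod (p ^ 2))]
  simp only [LinearMap.smul_apply, LinearMap.id_coe, id_eq, smul_smul, ← sq,
    ← Nat.cast_pow, ZMod.natCast_self, zero_smul]

/-- Any quotient of `pW` is a `ℤ/p`-vector space. -/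
noncomputable instance pSubQuotModZMod (p : ℕ) [NeZero p] (W : Type*) [AddCommGroup W]
    [Module (ZMod (p ^ 2)) W] (N : Submodule (ZMod (p ^ 2)) ↥(pSub p W)) :
    Module (ZMod p) (↥(pSub p W) ⧸ N) :=
  AddCommGroup.zmodModule (by
    intro x
    obtain ⟨y, rfl⟩ := Submodule.Quotient.mk_surjective _ x
    have h : (p : ℕ) • (Submodule.Quotient.mk y : ↥(pSub p W) ⧸ N) =
        Submodule.Quotient.mk ((p : ℕ) • y) := (map_nsmul N.mkQ p y).symm
    rw [h, p_smul_pSub p W y, Submodule.Quotient.mk_zero])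

/-!
Multiplication by `p` on `W` induces a surjection `W/pW → pW/φ(pV)`. An element `pw` lies in
`φ(pV) = p φ(V)` exactly when `w ∈ φ(V) + ker p`. When `W` is flat, tensoring the exact sequence
`ℤ/p² → ℤ/p² → ℤ/p²` of multiplications by `p` with `W` gives `ker p = pW`. Hence
`V/pV → W/pW → pW/φ(pV) → 0` is exact, and `f` is the inverse of the isomorphism it induces.
-/

section ScalarMultiplication

variable {R M N : Type*} [CommRing R] [AddCommGroup M] [Module R M] [AddCommGroup N] [Module R N]

lemma exact_lsmul_of_flat [Module.Flat R M] {a b : R}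
    (h : Function.Exact (LinearMap.lsmul R R b) (LinearMap.lsmul R R a)) :
    Function.Exact (LinearMap.lsmul R M b) (LinearMap.lsmul R M a) := by
  have rid_comp_lsmul (c : R) : LinearMap.lsmul R M c ∘ₗ (TensorProduct.rid R M).toLinearMap =
      (TensorProduct.rid R M).toLinearMap ∘ₗ (LinearMap.lsmul R R c).lTensor M := by
    ext m
    simp
  exact (Module.Flat.lTensor_exact M h).of_ladder_linearEquiv_of_exact
    (rid_comp_lsmul b) (rid_comp_lsmul a)

lemma comap_lsmul_map_range_lsmul (φ : M →ₗ[R] N) (a : R) :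
    ((LinearMap.range (LinearMap.lsmul R M a)).map φ).comap (LinearMap.lsmul R N a) =
      LinearMap.range φ ⊔ LinearMap.ker (LinearMap.lsmul R N a) := by
  have φ_comp_lsmul : φ ∘ₗ LinearMap.lsmul R M a = LinearMap.lsmul R N a ∘ₗ φ := by
    ext m
    simp
  rw [← LinearMap.range_comp, φ_comp_lsmul, LinearMap.range_comp, Submodule.comap_map_eq]

end ScalarMultiplication

lemma exact_lsmul_zmod_of_mul_eq {k m n : ℕ} (hmn : m * n = k) (hm : m ≠ 0) :
    Function.Exact (LinearMap.lsmul (ZMod k) (ZMod k) n)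
      (LinearMap.lsmul (ZMod k) (ZMod k) m) := by
  subst hmn
  intro c
  constructor
  · obtain ⟨z, rfl⟩ := ZMod.intCast_surjective c
    intro hz
    have hdvd : (m * n : ℤ) ∣ m * z := by
      rw [← Nat.cast_mul, ← ZMod.intCast_zmod_eq_zero_iff_dvd]
      simpa using hz
    obtain ⟨y, rfl⟩ := Int.dvd_of_mul_dvd_mul_left (by exact_mod_cast hm) hdvd
    exact ⟨y, by simp⟩
  · rintro ⟨d, rfl⟩
    rw [LinearMap.lsmul_apply, LinearMap.lsmul_apply, smul_smul, ← Nat.cast_mul,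
      ZMod.natCast_self, zero_smul]

section ReductionModP

variable {p : ℕ} {V W : Type*} [AddCommGroup V] [Module (ZMod (p ^ 2)) V]
  [AddCommGroup W] [Module (ZMod (p ^ 2)) W]

lemma pSub_eq_range_lsmul :
    pSub p W = LinearMap.range (LinearMap.lsmul (ZMod (p ^ 2)) W p) :=
  rfl

variable (p W) in
/-- Multiplication by `p` as a map `W → pW`. -/
def mulP : W →ₗ[ZMod (p ^ 2)] ↥(pSub p W) :=
  (LinearMap.lsmul (ZMod (p ^ 2)) W p).codRestrict (pSub p W) (smul_mem_pSub p W)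

@[simp] lemma coe_mulP (w : W) : (mulP p W w : W) = (p : ZMod (p ^ 2)) • w :=
  rfl

lemma mulP_eq_zero_of_mem {w : W} (hw : w ∈ pSub p W) : mulP p W w = 0 := by
  rw [← p_smul_pSub p W ⟨w, hw⟩]
  ext
  simp [Nat.cast_smul_eq_nsmul]

variable [NeZero p]

lemma ker_lsmul_eq_pSub [Module.Flat (ZMod (p ^ 2)) W] :
    LinearMap.ker (LinearMap.lsmul (ZMod (p ^ 2)) W p) = pSub p W :=
  LinearMap.exact_iff.mp <| exact_lsmul_of_flat <|
    exact_lsmul_zmod_of_mul_eq (sq p).symm (NeZero.ne p)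

lemma mk_mem_range_inducedMap_iff (φ : V →ₗ[ZMod (p ^ 2)] W) (w : W) :
    Submodule.Quotient.mk w ∈ LinearMap.range (inducedMap p φ) ↔
      w ∈ LinearMap.range φ ⊔ pSub p W := by
  have range_eq_map : Submodule.Quotient.mk w ∈ LinearMap.range (inducedMap p φ) ↔
      (pSub p W).mkQ w ∈ (LinearMap.range φ).map (pSub p W).mkQ := by
    simp [(pSub p V).mkQ_surjective.exists]
  rw [range_eq_map, ← Submodule.mem_comap, Submodule.comap_map_mkQ, sup_comm]

lemma smul_mem_map_pSub_iff [Module.Flat (ZMod (p ^ 2)) W] (φ : V →ₗ[ZMod (p ^ 2)] W) (w : W) :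
    (p : ZMod (p ^ 2)) • w ∈ (pSub p V).map φ ↔ w ∈ LinearMap.range φ ⊔ pSub p W := by
  rw [← LinearMap.lsmul_apply, ← Submodule.mem_comap, pSub_eq_range_lsmul,
    comap_lsmul_map_range_lsmul, ker_lsmul_eq_pSub]

/-- The map `W/pW → pW/φ(pV)` induced by multiplication by `p` on `W`, where `φ(pV)` is viewed as
a submodule of `pW`. -/
noncomputable def mulPQuotient (φ : V →ₗ[ZMod (p ^ 2)] W) :
    (W ⧸ pSub p W) →ₗ[ZMod p] (↥(pSub p W) ⧸ ((pSub p V).map φ).comap (pSub p W).subtype) :=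
  ((pSub p W).mapQ _ (mulP p W) fun w hw => by
    rw [Submodule.mem_comap, mulP_eq_zero_of_mem hw]
    exact Submodule.zero_mem _).toAddMonoidHom.toZModLinearMap p

@[simp] lemma mulPQuotient_mk (φ : V →ₗ[ZMod (p ^ 2)] W) (w : W) :
    mulPQuotient φ (Submodule.Quotient.mk w) =
      Submodule.Quotient.mk ⟨(p : ZMod (p ^ 2)) • w, smul_mem_pSub p W w⟩ :=
  rfl

lemma mulPQuotient_surjective (φ : V →ₗ[ZMod (p ^ 2)] W) :
    Function.Surjective (mulPQuotient φ) := by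
  intro y
  obtain ⟨⟨_, w, rfl⟩, rfl⟩ := Submodule.Quotient.mk_surjective _ y
  exact ⟨Submodule.Quotient.mk w, mulPQuotient_mk φ w⟩

lemma exact_inducedMap_mulPQuotient [Module.Flat (ZMod (p ^ 2)) W] (φ : V →ₗ[ZMod (p ^ 2)] W) :
    Function.Exact (inducedMap p φ) (mulPQuotient φ) := by
  intro x
  obtain ⟨w, rfl⟩ := Submodule.Quotient.mk_surjective _ x
  calc mulPQuotient φ (Submodule.Quotient.mk w) = 0
      ↔ (p : ZMod (p ^ 2)) • w ∈ (pSub p V).map φ := by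
        rw [mulPQuotient_mk, Submodule.Quotient.mk_eq_zero, Submodule.mem_comap,
          Submodule.subtype_apply]
    _ ↔ w ∈ LinearMap.range φ ⊔ pSub p W := smul_mem_map_pSub_iff φ w
    _ ↔ Submodule.Quotient.mk w ∈ LinearMap.range (inducedMap p φ) :=
        (mk_mem_range_inducedMap_iff φ w).symm

end ReductionModP

theorem pW_mod_phi_pV_iso_coker_general (p : ℕ) [NeZero p] (V W : Type*)
    [AddCommGroup V] [Module (ZMod (p ^ 2)) V]
    [AddCommGroup W] [Module (ZMod (p ^ 2)) W] [Module.Flat (ZMod (p ^ 2)) W]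
    (φ : V →ₗ[ZMod (p ^ 2)] W) :
    ∃ f : (↥(pSub p W) ⧸ Submodule.comap (pSub p W).subtype
            (Submodule.map φ (pSub p V)))
        ≃ₗ[ZMod p] ((W ⧸ pSub p W) ⧸ LinearMap.range (inducedMap p φ)),
      ∀ w : W,
        f (Submodule.Quotient.mk ⟨(p : ZMod (p ^ 2)) • w, smul_mem_pSub p W w⟩) =
          Submodule.Quotient.mk (Submodule.Quotient.mk w) := by
  have hexact := exact_inducedMap_mulPQuotient φ
  have hsurj := mulPQuotient_surjective φ
  refine ⟨(hexact.linearEquivOfSurjective hsurj).symm, fun w => ?_⟩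
  rw [← mulPQuotient_mk, hexact.linearEquivOfSurjective_symm_apply hsurj]

/-- For a `ℤ/p²`-linear map `φ : V → W` between free `ℤ/p²`-modules,
with induced map `ψ : V/pV → W/pW`, the map `pW/φ(pV) → coker ψ` sending
`p•w + φ(pV)` to `(w + pW) + ψ(V/pV)` is a well-defined `ℤ/p`-linear isomorphism. -/
theorem pW_mod_phi_pV_iso_coker (p : ℕ) [Fact p.Prime] (V W : Type*)
    [AddCommGroup V] [Module (ZMod (p ^ 2)) V] [Module.Free (ZMod (p ^ 2)) V]
    [AddCommGroup W] [Module (ZMod (p ^ 2)) W] [Module.Free (ZMod (p ^ 2)) W]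
    (φ : V →ₗ[ZMod (p ^ 2)] W) :
    ∃ f : (↥(pSub p W) ⧸ Submodule.comap (pSub p W).subtype
            (Submodule.map φ (pSub p V)))
        ≃ₗ[ZMod p] ((W ⧸ pSub p W) ⧸ LinearMap.range (inducedMap p φ)),
      ∀ w : W,
        f (Submodule.Quotient.mk ⟨(p : ZMod (p ^ 2)) • w, smul_mem_pSub p W w⟩) =
          Submodule.Quotient.mk (Submodule.Quotient.mk w) :=
  pW_mod_phi_pV_iso_coker_general p V W φ
end

section
/- Let p be a prime, let V and W be free modules over Z/p², and let ψ : V/pV → W/pW be a Z/p-linear map. Then the map Γ sending each Z/p²-linear map φ : V → W with induced map ψ to its Bockstein homomorphism β_φ ∈ Hom(ker ψ, coker ψ) is surjective: for every Z/p-linear map β : ker ψ → coker ψ, there exists a Z/p²-linear map φ : V → W whose induced map on reductions modulo p is ψ and whose Bockstein homomorphism equals β. -/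
/-- `β : ker ψ → coker ψ` is *the* Bockstein homomorphism of a map `φ : V → W`
inducing `ψ` when, for every `v ∈ V` reducing into `ker ψ` and every `w` with
`φ v = p • w`, one has `β v̄ = (w + pW) + ψ(V/pV)`. -/
def IsBockstein (p : ℕ) [NeZero p] {V W : Type*} [AddCommGroup V]
    [Module (ZMod (p ^ 2)) V] [AddCommGroup W] [Module (ZMod (p ^ 2)) W]
    (ψ : (V ⧸ pSub p V) →ₗ[ZMod p] (W ⧸ pSub p W)) (φ : V →ₗ[ZMod (p ^ 2)] W)
    (β : ↥(LinearMap.ker ψ) →ₗ[ZMod p] ((W ⧸ pSub p W) ⧸ LinearMap.range ψ)) : Prop :=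
  ∀ (v : V) (hv : Submodule.Quotient.mk v ∈ LinearMap.ker ψ) (w : W),
    φ v = (p : ZMod (p ^ 2)) • w →
    β ⟨Submodule.Quotient.mk v, hv⟩ = Submodule.Quotient.mk (Submodule.Quotient.mk w)

/-!
Since `W` is free, multiplication by `p` identifies `W/pW` with `pW`, so every lift `φ` of `ψ` has a
Bockstein homomorphism. Replacing `φ` by `φ + p • χ` leaves `ψ` unchanged and adds to the Bockstein
the map `ker ψ → V/pV → W/pW → coker ψ` given by the reduction of `χ`. Over the field `ℤ/p` every
map `ker ψ → coker ψ` factors in this way, and `χ` can reduce to any given map because `V` is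
projective, so every `β` is attained.
-/

lemma natCast_dvd_of_natCast_mul_eq_zero {n a b : ℕ} (ha : a ≠ 0) (h : a * b ∣ n) {c : ZMod n}
    (hc : (a : ZMod n) * c = 0) : (b : ZMod n) ∣ c := by
  obtain ⟨z, rfl⟩ := ZMod.intCast_surjective c
  have hz : (n : ℤ) ∣ a * z := by
    rw [← ZMod.intCast_zmod_eq_zero_iff_dvd]
    exact_mod_cast hc
  have hbz : (b : ℤ) ∣ z :=
    Int.dvd_of_mul_dvd_mul_left (by exact_mod_cast ha)
      ((by exact_mod_cast h : (a * b : ℤ) ∣ n).trans hz)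
  simpa using map_dvd (Int.castRingHom (ZMod n)) hbz

lemma exists_smul_eq_of_smul_eq_zero {R M : Type*} [CommRing R] [AddCommGroup M] [Module R M]
    [Module.Flat R M] {a b : R} (hab : ∀ c, a * c = 0 → b ∣ c) {m : M} (hm : a • m = 0) :
    ∃ m', b • m' = m := by
  have hrel : ∑ _i : Unit, a • m = 0 := by simpa using hm
  obtain ⟨k, c, y, hy, hc⟩ := Module.Flat.isTrivialRelation_of_sum_smul_eq_zero hrel
  choose d hd using fun j => hab (c () j) (by simpa using hc j)
  refine ⟨∑ j, d j • y j, ?_⟩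
  simp only [hy (), hd, Finset.smul_sum, mul_smul]

lemma exists_mkQ_comp_comp_subtype_eq {K E F : Type*} [DivisionRing K] [AddCommGroup E]
    [Module K E] [AddCommGroup F] [Module K F] {S : Submodule K E} {T : Submodule K F}
    (f : S →ₗ[K] F ⧸ T) : ∃ g : E →ₗ[K] F, T.mkQ ∘ₗ g ∘ₗ S.subtype = f := by
  obtain ⟨f', hf'⟩ := LinearMap.exists_extend f
  obtain ⟨g, hg⟩ := Module.projective_lifting_property T.mkQ f' T.mkQ_surjective
  exact ⟨g, by rw [← LinearMap.comp_assoc, hg, hf']⟩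

section Bockstein

variable {p : ℕ} [NeZero p] {V W : Type*} [AddCommGroup V] [Module (ZMod (p ^ 2)) V]
  [AddCommGroup W] [Module (ZMod (p ^ 2)) W]

lemma mem_pSub_of_smul_eq_zero [Module.Flat (ZMod (p ^ 2)) W] {w : W}
    (h : (p : ZMod (p ^ 2)) • w = 0) : w ∈ pSub p W :=
  exists_smul_eq_of_smul_eq_zero
    (fun _ => natCast_dvd_of_natCast_mul_eq_zero (NeZero.ne p) (sq p).symm.dvd) h

lemma inducedMap_surjective [Module.Projective (ZMod (p ^ 2)) V] :
    Function.Surjective (inducedMap p : (V →ₗ[ZMod (p ^ 2)] W) → _) := by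
  intro f
  obtain ⟨φ, hφ⟩ := Module.projective_lifting_property (pSub p W).mkQ
    (f.toAddMonoidHom.toZModLinearMap (p ^ 2) ∘ₗ (pSub p V).mkQ) (pSub p W).mkQ_surjective
  refine ⟨φ, LinearMap.ext fun x => ?_⟩
  obtain ⟨v, rfl⟩ := Submodule.Quotient.mk_surjective _ x
  exact LinearMap.congr_fun hφ v

lemma inducedMap_add_natCast_smul (φ χ : V →ₗ[ZMod (p ^ 2)] W) :
    inducedMap p (φ + (p : ZMod (p ^ 2)) • χ) = inducedMap p φ := by
  refine LinearMap.ext fun x => ?_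
  obtain ⟨v, rfl⟩ := Submodule.Quotient.mk_surjective _ x
  rw [inducedMap_mk, inducedMap_mk, Submodule.Quotient.eq, LinearMap.add_apply, add_sub_cancel_left]
  exact smul_mem_pSub p W (χ v)

lemma mk_mem_ker_inducedMap {φ : V →ₗ[ZMod (p ^ 2)] W} {v : V} :
    Submodule.Quotient.mk v ∈ LinearMap.ker (inducedMap p φ) ↔
      ∃ w : W, φ v = (p : ZMod (p ^ 2)) • w := by
  rw [LinearMap.mem_ker, inducedMap_mk, Submodule.Quotient.mk_eq_zero]
  exact exists_congr fun _ => eq_comm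

/-- The pairs `(v, w)` with `φ v = p • w`, that is, the graph of the correspondence that descends
to the Bockstein homomorphism of `φ`. -/
def bocksteinPairs (p : ℕ) {V W : Type*} [AddCommGroup V] [Module (ZMod (p ^ 2)) V]
    [AddCommGroup W] [Module (ZMod (p ^ 2)) W] (φ : V →ₗ[ZMod (p ^ 2)] W) :
    Submodule (ZMod (p ^ 2)) (V × W) :=
  LinearMap.eqLocus (φ ∘ₗ LinearMap.fst _ V W) ((p : ZMod (p ^ 2)) • LinearMap.snd _ V W)

namespace bocksteinPairs

/-- The projection `(v, w) ↦ v + pV` of `bocksteinPairs p φ` onto the kernel of the reduction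
of `φ`. -/
noncomputable def toKer (φ : V →ₗ[ZMod (p ^ 2)] W) :
    bocksteinPairs p φ →+ LinearMap.ker (inducedMap p φ) where
  toFun x := ⟨Submodule.Quotient.mk x.1.1, mk_mem_ker_inducedMap.2 ⟨x.1.2, x.2⟩⟩
  map_zero' := rfl
  map_add' _ _ := rfl

/-- The projection `(v, w) ↦ (w + pW) + φ̄(V/pV)` of `bocksteinPairs p φ` to the cokernel of the
reduction `φ̄` of `φ`. -/
noncomputable def toCoker (φ : V →ₗ[ZMod (p ^ 2)] W) :
    bocksteinPairs p φ →+ (W ⧸ pSub p W) ⧸ LinearMap.range (inducedMap p φ) where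
  toFun x := Submodule.Quotient.mk (Submodule.Quotient.mk x.1.2)
  map_zero' := rfl
  map_add' _ _ := rfl

lemma toKer_surjective (φ : V →ₗ[ZMod (p ^ 2)] W) : Function.Surjective (toKer φ) := by
  rintro ⟨x, hx⟩
  obtain ⟨v, rfl⟩ := Submodule.Quotient.mk_surjective _ x
  obtain ⟨w, hw⟩ := mk_mem_ker_inducedMap.1 hx
  exact ⟨⟨(v, w), hw⟩, rfl⟩

lemma ker_toKer_le_ker_toCoker [Module.Flat (ZMod (p ^ 2)) W] (φ : V →ₗ[ZMod (p ^ 2)] W) :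
    (toKer φ).ker ≤ (toCoker φ).ker := by
  rintro ⟨⟨v, w⟩, hvw : φ v = (p : ZMod (p ^ 2)) • w⟩ hv
  obtain ⟨u, rfl : (p : ZMod (p ^ 2)) • u = v⟩ : v ∈ pSub p V :=
    (Submodule.Quotient.mk_eq_zero _).1 (congrArg Subtype.val hv)
  have hu : φ u - w ∈ pSub p W :=
    mem_pSub_of_smul_eq_zero (by rw [smul_sub, ← map_smul, hvw, sub_self])
  exact (Submodule.Quotient.mk_eq_zero _).2
    ⟨Submodule.Quotient.mk u, (Submodule.Quotient.eq _).2 hu⟩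

end bocksteinPairs

/-- The Bockstein homomorphism `β_φ : ker φ̄ → coker φ̄` of `φ`, where `φ̄ = inducedMap p φ`,
obtained by factoring `(v, w) ↦ w` through `(v, w) ↦ v` on the pairs with `φ v = p • w`. -/
noncomputable def bockstein [Module.Flat (ZMod (p ^ 2)) W] (φ : V →ₗ[ZMod (p ^ 2)] W) :
    LinearMap.ker (inducedMap p φ) →ₗ[ZMod p]
      (W ⧸ pSub p W) ⧸ LinearMap.range (inducedMap p φ) :=
  ((bocksteinPairs.toKer φ).liftOfSurjective (bocksteinPairs.toKer_surjective φ)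
    ⟨bocksteinPairs.toCoker φ, bocksteinPairs.ker_toKer_le_ker_toCoker φ⟩).toZModLinearMap p

lemma isBockstein_bockstein [Module.Flat (ZMod (p ^ 2)) W] (φ : V →ₗ[ZMod (p ^ 2)] W) :
    IsBockstein p (inducedMap p φ) φ (bockstein φ) :=
  fun v _ w hvw => AddMonoidHom.liftOfRightInverse_comp_apply _ _
    (Function.rightInverse_surjInv (bocksteinPairs.toKer_surjective φ))
    ⟨bocksteinPairs.toCoker φ, bocksteinPairs.ker_toKer_le_ker_toCoker φ⟩ ⟨(v, w), hvw⟩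

lemma IsBockstein.add_natCast_smul {ψ : (V ⧸ pSub p V) →ₗ[ZMod p] (W ⧸ pSub p W)}
    {φ : V →ₗ[ZMod (p ^ 2)] W}
    {β : LinearMap.ker ψ →ₗ[ZMod p] ((W ⧸ pSub p W) ⧸ LinearMap.range ψ)}
    (h : IsBockstein p ψ φ β) (χ : V →ₗ[ZMod (p ^ 2)] W) :
    IsBockstein p ψ (φ + (p : ZMod (p ^ 2)) • χ)
      (β + (LinearMap.range ψ).mkQ ∘ₗ inducedMap p χ ∘ₗ (LinearMap.ker ψ).subtype) := by
  intro v hv w hw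
  have hφ : φ v = (p : ZMod (p ^ 2)) • (w - χ v) := by
    rw [smul_sub, ← hw, LinearMap.add_apply, LinearMap.smul_apply, add_sub_cancel_right]
  rw [LinearMap.add_apply, h v hv (w - χ v) hφ, Submodule.Quotient.mk_sub,
    Submodule.Quotient.mk_sub]
  exact sub_add_cancel _ _

end Bockstein

/-- Every `ℤ/p`-linear map `β : ker ψ → coker ψ` is the Bockstein
homomorphism of some `ℤ/p²`-linear map `φ : V → W` whose reduction mod `p` is `ψ`. -/
theorem bockstein_surjective (p : ℕ) [Fact p.Prime] (V W : Type*)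
    [AddCommGroup V] [Module (ZMod (p ^ 2)) V] [Module.Free (ZMod (p ^ 2)) V]
    [AddCommGroup W] [Module (ZMod (p ^ 2)) W] [Module.Free (ZMod (p ^ 2)) W]
    (ψ : (V ⧸ pSub p V) →ₗ[ZMod p] (W ⧸ pSub p W))
    (β : ↥(LinearMap.ker ψ) →ₗ[ZMod p] ((W ⧸ pSub p W) ⧸ LinearMap.range ψ)) :
    ∃ φ : V →ₗ[ZMod (p ^ 2)] W, inducedMap p φ = ψ ∧ IsBockstein p ψ φ β := by
  obtain ⟨φ, rfl⟩ := inducedMap_surjective ψ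
  obtain ⟨δ, hδ⟩ := exists_mkQ_comp_comp_subtype_eq (β - bockstein φ)
  obtain ⟨χ, rfl⟩ := inducedMap_surjective δ
  refine ⟨φ + (p : ZMod (p ^ 2)) • χ, inducedMap_add_natCast_smul φ χ, ?_⟩
  have hβ := (isBockstein_bockstein φ).add_natCast_smul χ
  rwa [hδ, add_sub_cancel] at hβ
end
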